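/- Let G be a finite connected simple graph with vertex set V. If G is regular or biregular, then the evolution algebras A(G) and A_RW(G) on ℝ^V are isomorphic as algebras. Conversely, if G is non-singular (its adjacency matrix is invertible) and A_RW(G) is isomorphic to A(G) as an algebra, then G is a regular graph or a biregular graph. -/

import Mathlib

/-!
Both directions reduce to a family of nonzero weights `α` on the vertices.

If `α k * deg i = α i ^ 2` for every edge `ki`, the diagonal map `e_i ↦ α i • e_i` is an
isomorphism `A(G) → A_RW(G)`. Constant weights `d` work for a `d`-regular graph, and the weights
`(d₁² d₂)^(1/3)` on `V₁`, `(d₁ d₂²)^(1/3)` on `V₂` work for a biregular one.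

Conversely, let `e : A_RW(G) → A(G)` be an isomorphism and let the adjacency matrix be invertible.
Then `e_i · e_j = 0` forces the images of distinct basis vectors to have disjoint supports, so `e`
is monomial: `e e_i = α i • e_{π i}` for a permutation `π`. Comparing `e (e_i · e_i)` with
`e e_i · e e_i` gives `α k = deg i * α i ^ 2` for every edge `ki`. Hence all neighbours `k` of `i`
have the same weight, and by the reversed edge relation `α i = deg k * α k ^ 2` also the same
degree; connectedness then gives regularity or biregularity.
-/

noncomputable section

/-- The degree of vertex `i` in a finite graph with adjacency coefficients `a`. -/
def deg {V : Type*} [Fintype V] (a : V → V → ℝ) (i : V) : ℝ := ∑ k, a k i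

/-- The product of the evolution algebra `A(G)` on `ℝ^V`:
`(v · w)_k = ∑_i v_i w_i a_{ki}`, i.e. `e_i · e_i = ∑_k a_{ki} e_k`, `e_i · e_j = 0`. -/
def prodA {V : Type*} [Fintype V] (a : V → V → ℝ) (v w : V → ℝ) : V → ℝ :=
  fun k => ∑ i, v i * w i * a k i

/-- The product of the evolution algebra `A_RW(G)` on `ℝ^V`:
`(v · w)_k = ∑_i v_i w_i a_{ki}/deg(i)`. -/
def prodRW {V : Type*} [Fintype V] (a : V → V → ℝ) (v w : V → ℝ) : V → ℝ :=
  fun k => ∑ i, v i * w i * (a k i / deg a i)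

/-- The finite graph is regular: all degrees are equal. -/
def GraphRegular {V : Type*} [Fintype V] (a : V → V → ℝ) : Prop :=
  ∃ d : ℝ, ∀ i, deg a i = d

/-- The finite graph is biregular: `V = V₁ ⊔ V₂` with every edge joining `V₁` to `V₂` and
constant degrees on `V₁` and on `V₂`. -/
def GraphBiregular {V : Type*} [Fintype V] (a : V → V → ℝ) : Prop :=
  ∃ (V₁ : Set V) (d₁ d₂ : ℝ),
    (∀ i ∈ V₁, deg a i = d₁) ∧ (∀ i ∉ V₁, deg a i = d₂) ∧
    ∀ i k, a k i = 1 → ((i ∈ V₁ ∧ k ∉ V₁) ∨ (i ∉ V₁ ∧ k ∈ V₁))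

theorem exists_edge_of_one_le_deg {V : Type*} [Fintype V] {a : V → V → ℝ}
    (hval : ∀ k i, a k i = 0 ∨ a k i = 1) (hdeg : ∀ i, 1 ≤ deg a i) (i : V) :
    ∃ k, a k i = 1 := by
  by_contra! h
  have h0 : deg a i = 0 := Finset.sum_eq_zero fun k _ => (hval k i).resolve_right (h k)
  linarith [hdeg i]

/-- Weights on the vertices for which the diagonal map is an isomorphism `A(G) → A_RW(G)`. -/
theorem exists_weights {V : Type*} [Fintype V] [Nonempty V] {a : V → V → ℝ}
    (hval : ∀ k i, a k i = 0 ∨ a k i = 1) (hdeg : ∀ i, 1 ≤ deg a i)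
    (h : GraphRegular a ∨ GraphBiregular a) :
    ∃ α : V → ℝ, (∀ i, α i ≠ 0) ∧ ∀ k i, a k i = 1 → α k * deg a i = α i ^ 2 := by
  classical
  have hne : ∀ i, deg a i ≠ 0 := fun i => by linarith [hdeg i]
  rcases h with ⟨d, hd⟩ | ⟨S, d₁, d₂, h₁, h₂, hS⟩
  · refine ⟨fun _ => d, fun i => hd i ▸ hne i, fun k i _ => ?_⟩
    rw [hd]
    ring
  · -- An edge exists, so both parts are nonempty and `d₁`, `d₂` are genuine degrees.
    obtain ⟨p, q, hp, hq⟩ : ∃ p q, p ∈ S ∧ q ∉ S := by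
      obtain ⟨i⟩ := ‹Nonempty V›
      obtain ⟨k, hk⟩ := exists_edge_of_one_le_deg hval hdeg i
      rcases hS i k hk with ⟨hi, hk⟩ | ⟨hi, hk⟩
      exacts [⟨i, k, hi, hk⟩, ⟨k, i, hk, hi⟩]
    have hd₁ : 0 < d₁ := by linarith [hdeg p, h₁ p hp]
    have hd₂ : 0 < d₂ := by linarith [hdeg q, h₂ q hq]
    have cube : ∀ d : ℝ, 0 < d → ∃ u : ℝ, 0 < u ∧ u ^ 3 = d := fun d hd =>
      ⟨d ^ ((3 : ℕ) : ℝ)⁻¹, Real.rpow_pos_of_pos hd _,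
        Real.rpow_inv_natCast_pow hd.le (by norm_num)⟩
    obtain ⟨u, hu, hu3⟩ := cube d₁ hd₁
    obtain ⟨w, hw, hw3⟩ := cube d₂ hd₂
    refine ⟨fun i => if i ∈ S then u ^ 2 * w else u * w ^ 2, fun i => ?_, fun k i hki => ?_⟩
    · dsimp only
      split_ifs <;> positivity
    · rcases hS i k hki with ⟨hi, hk⟩ | ⟨hi, hk⟩
      · simp only [hi, hk, if_true, if_false, h₁ i hi, ← hu3]
        ring
      · simp only [hi, hk, if_true, if_false, h₂ i hi, ← hw3]
        ring

theorem exists_iso_of_weights {V : Type*} [Fintype V] {a : V → V → ℝ}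
    (hval : ∀ k i, a k i = 0 ∨ a k i = 1) (hdeg : ∀ i, 1 ≤ deg a i)
    {α : V → ℝ} (hα : ∀ i, α i ≠ 0) (h : ∀ k i, a k i = 1 → α k * deg a i = α i ^ 2) :
    ∃ e : (V → ℝ) ≃ₗ[ℝ] (V → ℝ), ∀ v w, e (prodA a v w) = prodRW a (e v) (e w) := by
  refine ⟨LinearEquiv.piCongrRight fun i => LinearEquiv.smulOfNeZero ℝ ℝ (α i) (hα i),
    fun v w => ?_⟩
  ext k
  simp only [LinearEquiv.piCongrRight_apply, LinearEquiv.smulOfNeZero_apply, prodA, prodRW,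
    smul_eq_mul, Finset.mul_sum]
  refine Finset.sum_congr rfl fun i _ => ?_
  have hne : deg a i ≠ 0 := by linarith [hdeg i]
  rcases hval k i with h0 | h1
  · simp [h0]
  · rw [h1]
    field_simp
    linear_combination (v i * w i) * h k i h1

/-- An isomorphism `A_RW(G) → A(G)` of a non-singular graph is monomial, which yields nonzero
weights satisfying the edge relation. -/
theorem exists_weights_of_iso {V : Type*} [Fintype V] [DecidableEq V] {a : V → V → ℝ}
    (hval : ∀ k i, a k i = 0 ∨ a k i = 1) (hdeg : ∀ i, 1 ≤ deg a i)
    (hdet : (Matrix.of fun k i => a k i).det ≠ 0)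
    (e : (V → ℝ) ≃ₗ[ℝ] (V → ℝ)) (he : ∀ v w, e (prodRW a v w) = prodA a (e v) (e w)) :
    ∃ α : V → ℝ, (∀ i, α i ≠ 0) ∧ ∀ k i, a k i = 1 → α k = deg a i * α i ^ 2 := by
  set f : V → V → ℝ := fun i => e (Pi.single i 1) with hf
  have orth : ∀ i j, i ≠ j → ∀ m, f i m * f j m = 0 := by
    intro i j hij m
    have h0 : prodRW a (Pi.single i 1) (Pi.single j 1) = 0 := by
      ext k
      refine Finset.sum_eq_zero fun l _ => ?_
      by_cases hl : l = i
      · subst hl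
        simp [hij]
      · simp [hl]
    have h1 := he (Pi.single i 1) (Pi.single j 1)
    rw [h0, map_zero] at h1
    have h2 : (Matrix.of fun k i => a k i).mulVec (fun m => f i m * f j m) = 0 := by
      rw [h1]
      ext k
      simp [Matrix.mulVec, dotProduct, prodA, hf, mul_comm]
    exact congrFun (Matrix.eq_zero_of_mulVec_eq_zero hdet h2) m
  have hsupp : ∀ i, ∃ m, f i m ≠ 0 := by
    intro i
    by_contra! h
    have h1 : e (Pi.single i 1) = 0 := funext h
    have h2 := congrFun (e.map_eq_zero_iff.mp h1) i
    simp at h2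
  choose π hπ using hsupp
  have hinj : Function.Injective π := by
    intro i j hij
    by_contra hne
    rcases mul_eq_zero.mp (orth i j hne (π i)) with h | h
    · exact hπ i h
    · exact hπ j (hij ▸ h)
  have hsurj : Function.Surjective π := Finite.surjective_of_injective hinj
  have hoff : ∀ i m, m ≠ π i → f i m = 0 := by
    intro i m hm
    obtain ⟨j, rfl⟩ := hsurj m
    have hij : i ≠ j := fun h => hm (h ▸ rfl)
    exact (mul_eq_zero.mp (orth i j hij (π j))).resolve_right (hπ j)
  have hev : ∀ v k, e v (π k) = v k * f k (π k) := by
    intro v k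
    conv_lhs => rw [pi_eq_sum_univ' v]
    simp only [map_sum, map_smul, Finset.sum_apply, Pi.smul_apply, smul_eq_mul]
    rw [Finset.sum_eq_single k]
    · intro l _ hl
      rw [show e (Pi.single l 1) (π k) = 0 from hoff l (π k) fun h => hl (hinj h).symm, mul_zero]
    · simp
  refine ⟨fun i => f i (π i), hπ, fun k i hki => ?_⟩
  have hne : deg a i ≠ 0 := by linarith [hdeg i]
  have hsq := congrFun (he (Pi.single i 1) (Pi.single i 1)) (π k)
  have hL : prodRW a (Pi.single i 1) (Pi.single i 1) k = 1 / deg a i := by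
    unfold prodRW
    rw [Finset.sum_eq_single i]
    · simp [hki]
    · intro l _ hl
      simp [hl]
    · simp
  have hR : prodA a (e (Pi.single i 1)) (e (Pi.single i 1)) (π k)
      = f i (π i) * f i (π i) * a (π k) (π i) := by
    unfold prodA
    rw [Finset.sum_eq_single (π i)]
    · intro l _ hl
      rw [show e (Pi.single i 1) l = 0 from hoff i l hl]
      ring
    · simp
  rw [hev, hL, hR] at hsq
  -- `π` preserves edges, since the left-hand side is nonzero.
  rcases hval (π k) (π i) with h0 | h1
  · rw [h0, mul_zero] at hsq
    exact absurd hsq (mul_ne_zero (one_div_ne_zero hne) (hπ k))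
  · rw [h1] at hsq
    field_simp at hsq
    linear_combination hsq

theorem nbr_deg_eq_of_weights {V : Type*} [Fintype V] {a : V → V → ℝ}
    (hsym : ∀ k i, a k i = a i k) {α : V → ℝ} (hα : ∀ i, α i ≠ 0)
    (h : ∀ k i, a k i = 1 → α k = deg a i * α i ^ 2)
    {i k l : V} (hk : a k i = 1) (hl : a l i = 1) : deg a k = deg a l := by
  have hki := h k i hk
  have hik := h i k (hsym i k ▸ hk)
  have hli := h l i hl
  have hil := h i l (hsym i l ▸ hl)
  -- All neighbours of `i` carry the same weight, and `α i = deg k * α k ^ 2`.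
  have hkl : α k = α l := hki.trans hli.symm
  rw [← hkl] at hil
  exact mul_right_cancel₀ (pow_ne_zero 2 (hα k)) (hik.symm.trans hil)

/-- In a connected graph whose neighbourhoods have constant degree, only the degrees of a vertex and
of one of its neighbours occur, and they alternate along edges. -/
theorem regular_or_biregular_of_nbr_deg_eq {V : Type*} [Fintype V] [Nonempty V] {a : V → V → ℝ}
    (hval : ∀ k i, a k i = 0 ∨ a k i = 1) (hsym : ∀ k i, a k i = a i k)
    (hconn : ∀ i j : V, Relation.ReflTransGen (fun x y => a x y = 1) i j)
    (hdeg : ∀ i, 1 ≤ deg a i)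
    (h : ∀ i k l, a k i = 1 → a l i = 1 → deg a k = deg a l) :
    GraphRegular a ∨ GraphBiregular a := by
  obtain ⟨o⟩ := ‹Nonempty V›
  obtain ⟨p, hp⟩ := exists_edge_of_one_le_deg hval hdeg o
  have key : ∀ i, (deg a i = deg a o ∧ ∀ k, a k i = 1 → deg a k = deg a p) ∨
      (deg a i = deg a p ∧ ∀ k, a k i = 1 → deg a k = deg a o) := by
    intro i
    induction hconn o i with
    | refl => exact Or.inl ⟨rfl, fun k hk => h o k p hk hp⟩
    | @tail x y _ hxy ih =>
      have hyx : a y x = 1 := hsym y x ▸ hxy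
      rcases ih with ⟨hx, hn⟩ | ⟨hx, hn⟩
      · exact Or.inr ⟨hn y hyx, fun k hk => (h y k x hk hxy).trans hx⟩
      · exact Or.inl ⟨hn y hyx, fun k hk => (h y k x hk hxy).trans hx⟩
  by_cases hop : deg a o = deg a p
  · refine Or.inl ⟨deg a o, fun i => ?_⟩
    rcases key i with ⟨hi, _⟩ | ⟨hi, _⟩
    exacts [hi, hi.trans hop.symm]
  · refine Or.inr ⟨{i | deg a i = deg a o}, deg a o, deg a p, fun i hi => hi, fun i hi => ?_,
      fun i k hki => ?_⟩
    · rcases key i with ⟨hi', _⟩ | ⟨hi', _⟩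
      exacts [absurd hi' hi, hi']
    · simp only [Set.mem_ofPred_eq]
      rcases key i with ⟨hi, hn⟩ | ⟨hi, hn⟩
      · exact Or.inl ⟨hi, fun hk => hop (hk.symm.trans (hn k hki))⟩
      · exact Or.inr ⟨fun hi' => hop (hi'.symm.trans hi), hn k hki⟩

/-- for a finite connected simple graph, if it is regular or biregular then
the evolution algebras `A(G)` and `A_RW(G)` on `ℝ^V` are isomorphic as algebras;
conversely, if the graph is non-singular (invertible adjacency matrix) and `A_RW(G)` is
isomorphic to `A(G)` as an algebra, then the graph is regular or biregular. -/
theorem finite_graph_iso_iff_regular_or_biregular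
    {V : Type*} [Fintype V] [DecidableEq V] [Nonempty V]
    (a : V → V → ℝ)
    (hval : ∀ k i, a k i = 0 ∨ a k i = 1)
    (hsym : ∀ k i, a k i = a i k)
    (hloop : ∀ i, a i i = 0)
    (hconn : ∀ i j : V, Relation.ReflTransGen (fun x y => a x y = 1) i j)
    (hdeg : ∀ i, 1 ≤ deg a i) :
    ((GraphRegular a ∨ GraphBiregular a) →
      ∃ e : (V → ℝ) ≃ₗ[ℝ] (V → ℝ), ∀ v w, e (prodA a v w) = prodRW a (e v) (e w)) ∧
    ((Matrix.of fun k i => a k i).det ≠ 0 →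
      (∃ e : (V → ℝ) ≃ₗ[ℝ] (V → ℝ), ∀ v w, e (prodRW a v w) = prodA a (e v) (e w)) →
      GraphRegular a ∨ GraphBiregular a) := by
  refine ⟨fun h => ?_, fun hdet ⟨e, he⟩ => ?_⟩
  · obtain ⟨α, hα, hedge⟩ := exists_weights hval hdeg h
    exact exists_iso_of_weights hval hdeg hα hedge
  · obtain ⟨α, hα, hedge⟩ := exists_weights_of_iso hval hdeg hdet e he
    exact regular_or_biregular_of_nbr_deg_eq hval hsym hconn hdeg
      fun i k l hk hl => nbr_deg_eq_of_weights hsym hα hedge hk hl
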